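/- arXiv:1506.08927 — 2 statements merged into one kernel-verified Lean document; each statement's English description precedes it below -/
import Mathlib

section
/- Let n ≥ 1, ε = (−,…,−), and let d be a strand diagram on {0,…,n}. Let τd = { { a−1 mod (n+1), b−1 mod (n+1) } : {a,b} ∈ d } and τ⁻¹d = { { a+1 mod (n+1), b+1 mod (n+1) } : {a,b} ∈ d }. Then τd and τ⁻¹d are again strand diagrams, and there are isomorphisms of posets P_d ≅ P_{τd} and P_d ≅ P_{τ⁻¹d}. -/
namespace ESPaper

/-- The chords `c = {c.1, c.2}` and `d = {d.1, d.2}` (with `c.1 < c.2`, `d.1 < d.2`) cross. -/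
def Crosses (ε : ℕ → Bool) (c d : ℕ × ℕ) : Prop :=
  (c.1 < d.1 ∧ d.1 < c.2 ∧ c.2 < d.2 ∧ ε d.1 = ε c.2) ∨
  (d.1 < c.1 ∧ c.1 < d.2 ∧ d.2 < c.2 ∧ ε c.1 = ε d.2) ∨
  (c.1 < d.1 ∧ d.1 < d.2 ∧ d.2 < c.2 ∧ ε d.1 ≠ ε d.2) ∨
  (d.1 < c.1 ∧ c.1 < c.2 ∧ c.2 < d.2 ∧ ε c.1 ≠ ε c.2)

/-- The chords `c` and `d` share an endpoint. -/
def SharesEndpoint (c d : ℕ × ℕ) : Prop :=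
  c.1 = d.1 ∨ c.1 = d.2 ∨ c.2 = d.1 ∨ c.2 = d.2

/-- The chord `c` is clockwise from the chord `d` (chords written with `c.1 < c.2`, `d.1 < d.2`). -/
def Cw (ε : ℕ → Bool) (c d : ℕ × ℕ) : Prop :=
  (c.2 = d.1 ∧ ε c.2 = true) ∨
  (d.2 = c.1 ∧ ε c.1 = false) ∨
  (c.1 = d.1 ∧ ((c.2 < d.2 ∧ ε c.2 = false) ∨ (d.2 < c.2 ∧ ε d.2 = true))) ∨
  (c.2 = d.2 ∧ ((c.1 < d.1 ∧ ε d.1 = false) ∨ (d.1 < c.1 ∧ ε c.1 = true)))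

/-- The graph on `{0,…,n} ⊆ ℕ` determined by a finite set of chords. -/
def chordGraph (d : Finset (ℕ × ℕ)) : SimpleGraph ℕ :=
  SimpleGraph.fromEdgeSet {e : Sym2 ℕ | ∃ c ∈ d, e = s(c.1, c.2)}

/-- The graph on `{0,…,n} ⊆ ℕ` determined by a family of chords. -/
def chordGraphF {k : ℕ} (c : Fin k → ℕ × ℕ) : SimpleGraph ℕ :=
  SimpleGraph.fromEdgeSet {e : Sym2 ℕ | ∃ a : Fin k, e = s((c a).1, (c a).2)}

/-- `d` is a strand diagram on `S_{n,ε}`: valid pairwise-noncrossing chords forming a forest. -/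
def IsDiagram (n : ℕ) (ε : ℕ → Bool) (d : Finset (ℕ × ℕ)) : Prop :=
  (∀ c ∈ d, c.1 < c.2 ∧ c.2 ≤ n) ∧
  (∀ c ∈ d, ∀ c' ∈ d, ¬ Crosses ε c c') ∧
  (chordGraph d).IsAcyclic

/-- The family `c` is a strand diagram (pairwise-noncrossing chords forming a forest). -/
def IsDiagramF {k : ℕ} (ε : ℕ → Bool) (c : Fin k → ℕ × ℕ) : Prop :=
  (∀ a b : Fin k, ¬ Crosses ε (c a) (c b)) ∧ (chordGraphF c).IsAcyclic

/-- The partial order of the poset `P_d`: `x ≤ y` iff there is a chain of chords of `d`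
from `x` to `y` in which each chord shares an endpoint with, and is clockwise from,
the previous one. -/
def leD (ε : ℕ → Bool) (d : Finset (ℕ × ℕ)) : ℕ × ℕ → ℕ × ℕ → Prop :=
  Relation.ReflTransGen (fun x y => x ∈ d ∧ y ∈ d ∧ SharesEndpoint x y ∧ Cw ε y x)

/-- Rotation `τ` of a chord: subtract 1 from both endpoints mod `n+1`, renormalized. -/
def rotDown (n : ℕ) (c : ℕ × ℕ) : ℕ × ℕ :=
  (min ((c.1 + n) % (n + 1)) ((c.2 + n) % (n + 1)),
    max ((c.1 + n) % (n + 1)) ((c.2 + n) % (n + 1)))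

/-- Rotation `τ⁻¹` of a chord: add 1 to both endpoints mod `n+1`, renormalized. -/
def rotUp (n : ℕ) (c : ℕ × ℕ) : ℕ × ℕ :=
  (min ((c.1 + 1) % (n + 1)) ((c.2 + 1) % (n + 1)),
    max ((c.1 + 1) % (n + 1)) ((c.2 + 1) % (n + 1)))

/-!
For `ε = (−,…,−)` both relations on chords depend only on the *cyclic* order of `{0,…,n}`: two
chords cross iff the endpoints of one separate those of the other, and `{v, b}` is clockwise from
`{v, a}` iff `v, b, a` are in cyclic order. A vertex map that is injective and preserves the cyclic
order, such as `v ↦ v + k mod (n + 1)`, therefore preserves noncrossing diagrams and their posets;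
it maps a forest to an isomorphic forest because it is injective.
-/

section Forest

variable {V W : Type*} {G : SimpleGraph V} {H : SimpleGraph W}

theorem isAcyclic_of_hom_injOn_support (φ : G →g H) (hφ : Set.InjOn φ G.support)
    (hH : H.IsAcyclic) : G.IsAcyclic := by
  have hinduce : (G.induce G.support).IsAcyclic :=
    hH.comap (φ.comp (SimpleGraph.Embedding.induce _).toHom) hφ.injective
  intro v w hw
  have hsupport : ∀ u ∈ w.support, u ∈ G.support := fun u hu =>
    SimpleGraph.mem_support_of_mem_walk_support w hw.not_nil hu
  refine hinduce (w.induce _ hsupport) ?_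
  rwa [← SimpleGraph.Walk.isCycle_map_iff_of_injective
    (f := (SimpleGraph.Embedding.induce G.support).toHom) Subtype.val_injective,
    SimpleGraph.Walk.map_induce]

theorem isAcyclic_map_of_injOn_support {f : V → W} (hf : Set.InjOn f G.support)
    (hG : G.IsAcyclic) : (G.map f).IsAcyclic := by
  rcases isEmpty_or_nonempty V with hV | hV
  · have hbot : G.map f = ⊥ := by
      ext x y
      simp only [SimpleGraph.map_adj', IsEmpty.exists_iff, and_false, SimpleGraph.bot_adj]
    exact hbot ▸ SimpleGraph.isAcyclic_bot
  let φ : G.map f →g G :=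
    { toFun := Function.invFunOn f G.support
      map_rel' := by
        rintro _ _ ⟨-, u, v, huv, rfl, rfl⟩
        rwa [hf.leftInvOn_invFunOn huv.mem_support_left,
          hf.leftInvOn_invFunOn huv.mem_support_right] }
  have hsupport : (G.map f).support ⊆ f '' G.support := by
    rintro _ ⟨_, -, u, v, huv, rfl, -⟩
    exact ⟨u, huv.mem_support_left, rfl⟩
  exact isAcyclic_of_hom_injOn_support φ ((f.invFunOn_injOn_image _).mono hsupport) hG

end Forest

section Sym2Map

variable {α β : Type*} {h : α → β}

theorem exists_eq_mk_of_map_eq_mk {e : Sym2 α} {u v : β} (he : e.map h = s(u, v)) :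
    ∃ a b, e = s(a, b) ∧ h a = u ∧ h b = v := by
  induction e with | _ a b
  rcases Sym2.eq_iff.1 he with ⟨ha, hb⟩ | ⟨ha, hb⟩
  · exact ⟨a, b, rfl, ha, hb⟩
  · exact ⟨b, a, Sym2.eq_swap, hb, ha⟩

theorem injOn_sym2Map {S : Set α} (hh : Set.InjOn h S) : Set.InjOn (Sym2.map h) S.sym2 := by
  intro e he f hf hef
  induction f with | _ c d
  obtain ⟨a, b, rfl, hac, hbd⟩ := exists_eq_mk_of_map_eq_mk hef
  exact congrArg₂ Sym2.mk (hh he.1 hf.1 hac) (hh he.2 hf.2 hbd)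

end Sym2Map

section CyclicOrder

variable {α β : Type*} [SBtw α] [SBtw β]

/-- Two chords of a circle, given by their unordered pairs of endpoints, *separate* each other if
the endpoints of the second lie on different open arcs cut out by the first. -/
def Separate (e f : Sym2 α) : Prop :=
  ∃ a b c d, e = s(a, b) ∧ f = s(c, d) ∧ sbtw a c b ∧ sbtw b d a

/-- The chord `f` of a circle is *clockwise* from the chord `e`: around a common endpoint `v` they
are `e = {v, a}` and `f = {v, b}` with `v, b, a` in cyclic order. -/
def Clockwise (e f : Sym2 α) : Prop :=
  ∃ v a b, e = s(v, a) ∧ f = s(v, b) ∧ sbtw v b a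

/-- The map `h` embeds the set of vertices `S` of one circle into another circle, preserving and
reflecting the strict cyclic order. Injectivity is a separate field since on at most two vertices
there is no cyclic order to reflect. -/
structure IsCyclicEmbeddingOn (h : α → β) (S : Set α) : Prop where
  injOn : Set.InjOn h S
  sbtw_iff : ∀ ⦃a⦄, a ∈ S → ∀ ⦃b⦄, b ∈ S → ∀ ⦃c⦄, c ∈ S → (sbtw (h a) (h b) (h c) ↔ sbtw a b c)

namespace IsCyclicEmbeddingOn

variable {h : α → β} {S : Set α} {e f : Sym2 α}

theorem separate_map_iff (hh : IsCyclicEmbeddingOn h S) (he : e ∈ S.sym2) (hf : f ∈ S.sym2) :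
    Separate (e.map h) (f.map h) ↔ Separate e f := by
  constructor
  · rintro ⟨_, _, _, _, hea, hfc, hacb, hbda⟩
    obtain ⟨a, b, rfl, rfl, rfl⟩ := exists_eq_mk_of_map_eq_mk hea
    obtain ⟨c, d, rfl, rfl, rfl⟩ := exists_eq_mk_of_map_eq_mk hfc
    exact ⟨a, b, c, d, rfl, rfl, (hh.sbtw_iff he.1 hf.1 he.2).1 hacb,
      (hh.sbtw_iff he.2 hf.2 he.1).1 hbda⟩
  · rintro ⟨a, b, c, d, rfl, rfl, hacb, hbda⟩
    exact ⟨h a, h b, h c, h d, rfl, rfl, (hh.sbtw_iff he.1 hf.1 he.2).2 hacb,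
      (hh.sbtw_iff he.2 hf.2 he.1).2 hbda⟩

theorem clockwise_map_iff (hh : IsCyclicEmbeddingOn h S) (he : e ∈ S.sym2) (hf : f ∈ S.sym2) :
    Clockwise (e.map h) (f.map h) ↔ Clockwise e f := by
  constructor
  · rintro ⟨_, _, _, hev, hfv, hvba⟩
    obtain ⟨v, a, rfl, rfl, rfl⟩ := exists_eq_mk_of_map_eq_mk hev
    obtain ⟨v', b, rfl, hvv', rfl⟩ := exists_eq_mk_of_map_eq_mk hfv
    obtain rfl : v' = v := hh.injOn hf.1 he.1 hvv'
    exact ⟨v', a, b, rfl, rfl, (hh.sbtw_iff he.1 hf.2 he.2).1 hvba⟩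
  · rintro ⟨v, a, b, rfl, rfl, hvba⟩
    exact ⟨h v, h a, h b, rfl, rfl, (hh.sbtw_iff he.1 hf.2 he.2).2 hvba⟩

end IsCyclicEmbeddingOn

end CyclicOrder

attribute [local instance] LT.toSBtw

section MinusSigns

variable {c c' : ℕ × ℕ}

theorem crosses_iff_separate (hc : c.1 < c.2) (hc' : c'.1 < c'.2) :
    Crosses (fun _ => false) c c' ↔ Separate s(c.1, c.2) s(c'.1, c'.2) := by
  constructor
  · rintro (⟨h₁, h₂, h₃, -⟩ | ⟨h₁, h₂, h₃, -⟩ | ⟨-, -, -, hne⟩ | ⟨-, -, -, hne⟩)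
    · exact ⟨c.1, c.2, c'.1, c'.2, rfl, rfl, by rw [sbtw_iff]; omega, by rw [sbtw_iff]; omega⟩
    · exact ⟨c.1, c.2, c'.2, c'.1, rfl, Sym2.eq_swap, by rw [sbtw_iff]; omega,
        by rw [sbtw_iff]; omega⟩
    · exact absurd rfl hne
    · exact absurd rfl hne
  · rintro ⟨x, y, z, w, hxy, hzw, hxzy, hywx⟩
    rw [Sym2.eq_iff] at hxy hzw
    rw [sbtw_iff] at hxzy hywx
    simp only [Crosses, ne_eq, not_true_eq_false, and_false, or_false, and_true]
    omega

theorem sharesEndpoint_and_cw_iff_clockwise (hc : c.1 < c.2) (hc' : c'.1 < c'.2) :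
    SharesEndpoint c c' ∧ Cw (fun _ => false) c' c ↔ Clockwise s(c.1, c.2) s(c'.1, c'.2) := by
  simp only [SharesEndpoint, Cw, Bool.false_eq_true, and_false, and_true, or_false, false_or]
  constructor
  · rintro ⟨-, hmeet | ⟨hfst, hlt⟩ | ⟨hsnd, hlt⟩⟩
    · exact ⟨c.2, c.1, c'.2, Sym2.eq_swap, by rw [hmeet], by rw [sbtw_iff]; omega⟩
    · exact ⟨c.1, c.2, c'.2, rfl, by rw [hfst], by rw [sbtw_iff]; omega⟩
    · exact ⟨c.2, c.1, c'.1, Sym2.eq_swap, by rw [hsnd, Sym2.eq_swap], by rw [sbtw_iff]; omega⟩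
  · rintro ⟨v, x, y, hvx, hvy, hvyx⟩
    rw [Sym2.eq_iff] at hvx hvy
    rw [sbtw_iff] at hvyx
    omega

end MinusSigns

/-- The image of a chord under a map of vertices, with its endpoints put in increasing order. The
rotations `rotDown n` and `rotUp n` are the cases `h v = (v + n) % (n + 1)` and
`h v = (v + 1) % (n + 1)`, definitionally. -/
def mapChord (h : ℕ → ℕ) (c : ℕ × ℕ) : ℕ × ℕ :=
  (min (h c.1) (h c.2), max (h c.1) (h c.2))

theorem edge_mapChord (h : ℕ → ℕ) (c : ℕ × ℕ) :
    s((mapChord h c).1, (mapChord h c).2) = Sym2.map h s(c.1, c.2) :=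
  Sym2.sortEquiv.left_inv s(h c.1, h c.2)

theorem chordGraph_image_mapChord_le (h : ℕ → ℕ) (d : Finset (ℕ × ℕ)) :
    chordGraph (d.image (mapChord h)) ≤ (chordGraph d).map h := by
  intro x y hxy
  obtain ⟨⟨_, hmem, hedge⟩, hne⟩ := (SimpleGraph.fromEdgeSet_adj _).1 hxy
  obtain ⟨c, hc, rfl⟩ := Finset.mem_image.1 hmem
  rw [edge_mapChord] at hedge
  obtain ⟨a, b, hab, rfl, rfl⟩ := exists_eq_mk_of_map_eq_mk hedge.symm
  have hadj : (chordGraph d).Adj a b :=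
    (SimpleGraph.fromEdgeSet_adj _).2 ⟨⟨c, hc, hab.symm⟩, fun heq => hne (congrArg h heq)⟩
  exact SimpleGraph.map_adj_apply' hadj hne

theorem leD_image_iff {ε ε' : ℕ → Bool} {d : Finset (ℕ × ℕ)} {f : ℕ × ℕ → ℕ × ℕ}
    (hf : Set.InjOn f d)
    (hstep : ∀ x ∈ d, ∀ y ∈ d, SharesEndpoint (f x) (f y) ∧ Cw ε' (f y) (f x) ↔
      SharesEndpoint x y ∧ Cw ε y x)
    {x y : ℕ × ℕ} (hx : x ∈ d) (hy : y ∈ d) :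
    leD ε' (d.image f) (f x) (f y) ↔ leD ε d x y := by
  have hinv : Set.LeftInvOn (Function.invFunOn f d) f d := hf.leftInvOn_invFunOn
  constructor
  · intro hle
    rw [← hinv hx, ← hinv hy]
    refine Relation.ReflTransGen.lift (Function.invFunOn f d) ?_ _ _ hle
    rintro _ _ ⟨hfu, hfv, huv⟩
    obtain ⟨u, hu, rfl⟩ := Finset.mem_image.1 hfu
    obtain ⟨v, hv, rfl⟩ := Finset.mem_image.1 hfv
    rw [Function.onFun, hinv hu, hinv hv]
    exact ⟨hu, hv, (hstep u hu v hv).1 huv⟩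
  · refine Relation.ReflTransGen.lift f ?_ _ _
    rintro u v ⟨hu, hv, huv⟩
    exact ⟨Finset.mem_image_of_mem f hu, Finset.mem_image_of_mem f hv, (hstep u hu v hv).2 huv⟩

section Transport

variable {n m : ℕ} {h : ℕ → ℕ} {d : Finset (ℕ × ℕ)} {c c' : ℕ × ℕ}

/-- The pair `c` is a chord on `{0,…,n}`, written with its endpoints in increasing order. -/
def IsChord (n : ℕ) (c : ℕ × ℕ) : Prop :=
  c.1 < c.2 ∧ c.2 ≤ n

namespace IsChord

theorem edge_mem_sym2 (hc : IsChord n c) : s(c.1, c.2) ∈ (Set.Iic n).sym2 :=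
  ⟨hc.1.le.trans hc.2, hc.2⟩

theorem mapChord_fst_lt_snd (hh : Set.InjOn h (Set.Iic n)) (hc : IsChord n c) :
    (mapChord h c).1 < (mapChord h c).2 :=
  min_lt_max.2 (hh.ne hc.edge_mem_sym2.1 hc.edge_mem_sym2.2 hc.1.ne)

theorem crosses_mapChord_iff (hh : IsCyclicEmbeddingOn h (Set.Iic n))
    (hc : IsChord n c) (hc' : IsChord n c') :
    Crosses (fun _ => false) (mapChord h c) (mapChord h c') ↔ Crosses (fun _ => false) c c' := by
  rw [crosses_iff_separate (hc.mapChord_fst_lt_snd hh.injOn) (hc'.mapChord_fst_lt_snd hh.injOn),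
    crosses_iff_separate hc.1 hc'.1, edge_mapChord, edge_mapChord,
    hh.separate_map_iff hc.edge_mem_sym2 hc'.edge_mem_sym2]

theorem sharesEndpoint_and_cw_mapChord_iff (hh : IsCyclicEmbeddingOn h (Set.Iic n))
    (hc : IsChord n c) (hc' : IsChord n c') :
    SharesEndpoint (mapChord h c) (mapChord h c') ∧
        Cw (fun _ => false) (mapChord h c') (mapChord h c) ↔
      SharesEndpoint c c' ∧ Cw (fun _ => false) c' c := by
  rw [sharesEndpoint_and_cw_iff_clockwise (hc.mapChord_fst_lt_snd hh.injOn)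
      (hc'.mapChord_fst_lt_snd hh.injOn),
    sharesEndpoint_and_cw_iff_clockwise hc.1 hc'.1, edge_mapChord, edge_mapChord,
    hh.clockwise_map_iff hc.edge_mem_sym2 hc'.edge_mem_sym2]

end IsChord

theorem injOn_mapChord (hh : Set.InjOn h (Set.Iic n)) :
    Set.InjOn (mapChord h) {c | IsChord n c} := by
  intro c hc c' hc' heq
  have hmap : Sym2.map h s(c.1, c.2) = Sym2.map h s(c'.1, c'.2) := by
    rw [← edge_mapChord, ← edge_mapChord, heq]
  have hedge := injOn_sym2Map hh hc.edge_mem_sym2 hc'.edge_mem_sym2 hmap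
  rcases Sym2.eq_iff.1 hedge with ⟨hfst, hsnd⟩ | ⟨hfst, hsnd⟩
  · exact Prod.ext hfst hsnd
  · exact absurd hc'.1 (by rw [← hfst, ← hsnd]; exact hc.1.asymm)

theorem chordGraph_support_subset (hd : ∀ c ∈ d, IsChord n c) :
    (chordGraph d).support ⊆ Set.Iic n := by
  rintro x ⟨y, hxy⟩
  obtain ⟨⟨c, hc, hedge⟩, -⟩ := (SimpleGraph.fromEdgeSet_adj _).1 hxy
  have hmem : s(x, y) ∈ (Set.Iic n).sym2 := hedge ▸ (hd c hc).edge_mem_sym2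
  exact hmem.1

namespace IsDiagram

theorem image_mapChord (hh : IsCyclicEmbeddingOn h (Set.Iic n))
    (hmaps : Set.MapsTo h (Set.Iic n) (Set.Iic m)) (hd : IsDiagram n (fun _ => false) d) :
    IsDiagram m (fun _ => false) (d.image (mapChord h)) := by
  obtain ⟨hchord, hcross, hforest⟩ := hd
  refine ⟨?_, ?_, ?_⟩
  · refine Finset.forall_mem_image.2 fun c hc => ?_
    have hvertices := IsChord.edge_mem_sym2 (hchord c hc)
    exact ⟨IsChord.mapChord_fst_lt_snd hh.injOn (hchord c hc),
      max_le (hmaps hvertices.1) (hmaps hvertices.2)⟩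
  · refine Finset.forall_mem_image.2 fun c hc => Finset.forall_mem_image.2 fun c' hc' => ?_
    rw [IsChord.crosses_mapChord_iff hh (hchord c hc) (hchord c' hc')]
    exact hcross c hc c' hc'
  · have hinj : Set.InjOn h (chordGraph d).support :=
      hh.injOn.mono (chordGraph_support_subset hchord)
    exact (isAcyclic_map_of_injOn_support hinj hforest).anti (chordGraph_image_mapChord_le h d)

theorem exists_equiv_leD_image_mapChord (hh : IsCyclicEmbeddingOn h (Set.Iic n))
    (hd : IsDiagram n (fun _ => false) d) :
    ∃ e : {c : ℕ × ℕ // c ∈ d} ≃ {c : ℕ × ℕ // c ∈ d.image (mapChord h)},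
      ∀ x y : {c : ℕ × ℕ // c ∈ d},
        leD (fun _ => false) d x.1 y.1 ↔
          leD (fun _ => false) (d.image (mapChord h)) (e x).1 (e y).1 := by
  have hinj : Set.InjOn (mapChord h) d := (injOn_mapChord hh.injOn).mono hd.1
  have hbij : Set.BijOn (mapChord h) d (d.image (mapChord h) : Finset (ℕ × ℕ)) := by
    rw [Finset.coe_image]
    exact hinj.bijOn_image
  exact ⟨hbij.equiv, fun x y => (leD_image_iff hinj (fun c hc c' hc' =>
    IsChord.sharesEndpoint_and_cw_mapChord_iff hh (hd.1 c hc) (hd.1 c' hc')) x.2 y.2).symm⟩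

end IsDiagram

end Transport

theorem isCyclicEmbeddingOn_add_mod (n k : ℕ) :
    IsCyclicEmbeddingOn (fun v => (v + k) % (n + 1)) (Set.Iic n) := by
  have : k % (n + 1) < n + 1 := Nat.mod_lt k n.succ_pos
  have hrot : ∀ v ∈ Set.Iic n, (v + k) % (n + 1) =
      if n + 1 ≤ v + k % (n + 1) then v + k % (n + 1) - (n + 1) else v + k % (n + 1) := by
    intro v hv
    rw [Nat.add_mod_eq_ite, Nat.mod_eq_of_lt (Nat.lt_succ_of_le hv)]
  constructor
  · intro a ha b hb hab
    simp only [hrot a ha, hrot b hb] at hab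
    rw [Set.mem_Iic] at ha hb
    split_ifs at hab <;> omega
  · intro a ha b hb c hc
    rw [sbtw_iff, sbtw_iff, hrot a ha, hrot b hb, hrot c hc]
    rw [Set.mem_Iic] at ha hb hc
    split_ifs <;> omega

theorem rotation_invariance_general (n k : ℕ) (d : Finset (ℕ × ℕ))
    (hd : IsDiagram n (fun _ => false) d) :
    IsDiagram n (fun _ => false) (d.image (mapChord fun v => (v + k) % (n + 1))) ∧
      ∃ e : {c : ℕ × ℕ // c ∈ d} ≃
          {c : ℕ × ℕ // c ∈ d.image (mapChord fun v => (v + k) % (n + 1))},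
        ∀ x y : {c : ℕ × ℕ // c ∈ d},
          leD (fun _ => false) d x.1 y.1 ↔
            leD (fun _ => false) (d.image (mapChord fun v => (v + k) % (n + 1)))
              (e x).1 (e y).1 := by
  have hrot := isCyclicEmbeddingOn_add_mod n k
  have hmaps : Set.MapsTo (fun v => (v + k) % (n + 1)) (Set.Iic n) (Set.Iic n) :=
    fun v _ => Nat.le_of_lt_succ (Nat.mod_lt _ n.succ_pos)
  exact ⟨hd.image_mapChord hrot hmaps, hd.exists_equiv_leD_image_mapChord hrot⟩

/-- Lemma 5.5: for `ε = (−,…,−)`, the rotations `τd` and `τ⁻¹d` of a strand diagram `d`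
are strand diagrams, and `P_d ≅ P_{τd}` and `P_d ≅ P_{τ⁻¹d}` as posets. -/
theorem rotation_invariance (n : ℕ) (hn : 1 ≤ n) (d : Finset (ℕ × ℕ))
    (hd : IsDiagram n (fun _ => false) d) :
    (IsDiagram n (fun _ => false) (d.image (rotDown n)) ∧
      ∃ e : {c : ℕ × ℕ // c ∈ d} ≃ {c : ℕ × ℕ // c ∈ d.image (rotDown n)},
        ∀ x y : {c : ℕ × ℕ // c ∈ d},
          leD (fun _ => false) d x.1 y.1 ↔
            leD (fun _ => false) (d.image (rotDown n)) (e x).1 (e y).1) ∧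
    (IsDiagram n (fun _ => false) (d.image (rotUp n)) ∧
      ∃ e : {c : ℕ × ℕ // c ∈ d} ≃ {c : ℕ × ℕ // c ∈ d.image (rotUp n)},
        ∀ x y : {c : ℕ × ℕ // c ∈ d},
          leD (fun _ => false) d x.1 y.1 ↔
            leD (fun _ => false) (d.image (rotUp n)) (e x).1 (e y).1) := by
  exact ⟨rotation_invariance_general n n d hd, rotation_invariance_general n 1 d hd⟩

end ESPaper
end

section
/- Let n ≥ 1 and ε = (−,…,−). Then (n+1)^{n−1} equals the sum, over all noncrossing spanning trees d on {0,…,n}, of the number of linear extensions of the poset P_d. -/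
namespace ESPaper

/-- The number of linear extensions of the poset `P_d`, recorded as the number of
enumerations `g : Fin d.card → d` (the inverse of a linear extension) that are
order-preserving from `P_d`. -/
noncomputable def linExtCount (ε : ℕ → Bool) (d : Finset (ℕ × ℕ)) : ℕ :=
  Set.ncard {g : Fin d.card → ℕ × ℕ | (∀ a, g a ∈ d) ∧ Function.Injective g ∧
    ∀ a b : Fin d.card, leD ε d (g a) (g b) → a ≤ b}

/-!
A linear extension of `P_d` labels the chords of `d` by `1, …, n`, increasingly in the clockwise
direction. Recording the right endpoint of every chord turns a labelled tree into a function
`f : {1, …, n} → {1, …, n}`. Each chord spans exactly one cell `[x, x + 1]` spanned by none of the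
chords nested in it, so at most `s` chords end at or before `s`: up to reflection, `f` is a parking
function. Conversely `f` determines the labelled tree. Among the chords with the largest right
endpoint `t`, remove the one with the largest label `l`. The left endpoint of the removed chord must
be visible from above and see exactly one uncovered cell, i.e. it lies on the roof left of the last
uncovered cell before `t`. Labels increase along the roof, and `l` fits between the labels at
exactly one roof vertex. Parking functions are counted by recursion on the largest allowed value.
-/

open Finset

/-- The sign vector `ε = (−,…,−)`. -/
abbrev allMinus : ℕ → Bool := fun _ => false

theorem crosses_allMinus {c d : ℕ × ℕ} :
    Crosses allMinus c d ↔
      (c.1 < d.1 ∧ d.1 < c.2 ∧ c.2 < d.2) ∨ (d.1 < c.1 ∧ c.1 < d.2 ∧ d.2 < c.2) := by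
  simp [Crosses]

theorem cw_allMinus {c d : ℕ × ℕ} :
    Cw allMinus d c ↔ c.2 = d.1 ∨ (c.1 = d.1 ∧ d.2 < c.2) ∨ (c.2 = d.2 ∧ d.1 < c.1) := by
  simp [Cw, eq_comm]

/-! ### Gap forests -/

section Geometry

variable {d : Finset (ℕ × ℕ)} {b c : ℕ × ℕ} {x : ℕ}

/-- The cells covered by the chords of `d`, where the cell `x` is the segment from `x` to `x + 1`
and the chord `c` spans the cells `c.1, …, c.2 - 1`. -/
def covered (d : Finset (ℕ × ℕ)) : Finset ℕ := d.biUnion fun c => Ico c.1 c.2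

/-- The chords of `d` other than `c` that are nested in `c`. -/
def below (d : Finset (ℕ × ℕ)) (c : ℕ × ℕ) : Finset (ℕ × ℕ) :=
  {b ∈ d | b ≠ c ∧ c.1 ≤ b.1 ∧ b.2 ≤ c.2}

/-- `c` is nested in no chord of `d`; in particular `c ∉ d`. -/
def Outermost (d : Finset (ℕ × ℕ)) (c : ℕ × ℕ) : Prop := ∀ b ∈ d, ¬ (b.1 ≤ c.1 ∧ c.2 ≤ b.2)

/-- A set of pairwise noncrossing chords in which every chord `c` has exactly one gap: a cell
spanned by `c` but by none of the chords nested in `c`. For `n` chords on the vertices `0, …, n`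
this amounts to being a noncrossing spanning tree. -/
structure IsGapForest (d : Finset (ℕ × ℕ)) : Prop where
  fst_lt_snd : ∀ c ∈ d, c.1 < c.2
  noncrossing : ∀ c ∈ d, ∀ c' ∈ d, ¬ Crosses allMinus c c'
  card_gap : ∀ c ∈ d, #(Ico c.1 c.2 \ covered (below d c)) = 1

theorem mem_covered : x ∈ covered d ↔ ∃ c ∈ d, c.1 ≤ x ∧ x < c.2 := by
  simp [covered]

theorem mem_below : b ∈ below d c ↔ b ∈ d ∧ b ≠ c ∧ c.1 ≤ b.1 ∧ b.2 ≤ c.2 := by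
  simp [below]

theorem covered_insert : covered (insert c d) = Ico c.1 c.2 ∪ covered d :=
  biUnion_insert

theorem Outermost.notMem (hc : Outermost d c) : c ∉ d :=
  fun hmem => hc c hmem ⟨le_rfl, le_rfl⟩

theorem below_insert_self : below (insert c d) c = below d c := by
  simp [below, filter_insert]

theorem Outermost.below_insert (hc : Outermost d c) (hb : b ∈ d) :
    below (insert c d) b = below d b := by
  rw [below, filter_insert, if_neg fun h => hc b hb h.2, below]

theorem Outermost.sdiff_covered_below (hc : Outermost d c)
    (hcross : ∀ b ∈ d, ¬ Crosses allMinus b c) :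
    Ico c.1 c.2 \ covered (below d c) = Ico c.1 c.2 \ covered d := by
  ext x
  simp only [mem_sdiff, and_congr_right_iff, not_iff_not, mem_covered, mem_below, mem_Ico]
  refine fun hx => ⟨fun ⟨b, hb, hbx⟩ => ⟨b, hb.1, hbx⟩, fun ⟨b, hb, hbx⟩ => ?_⟩
  have hbc := hc b hb
  have hcross := mt crosses_allMinus.2 (hcross b hb)
  exact ⟨b, ⟨hb, by rintro rfl; omega, by omega, by omega⟩, hbx⟩

theorem isGapForest_empty : IsGapForest ∅ := ⟨by simp, by simp, by simp⟩

theorem isGapForest_insert_iff (hc : Outermost d c) :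
    IsGapForest (insert c d) ↔ IsGapForest d ∧ c.1 < c.2 ∧
      (∀ b ∈ d, ¬ Crosses allMinus b c) ∧ #(Ico c.1 c.2 \ covered d) = 1 := by
  have crosses_comm (b c : ℕ × ℕ) : Crosses allMinus b c ↔ Crosses allMinus c b := by
    simp only [crosses_allMinus]; tauto
  have not_crosses_self : ¬ Crosses allMinus c c := by simp [crosses_allMinus]
  constructor
  · intro h
    have hcross : ∀ b ∈ d, ¬ Crosses allMinus b c := fun b hb =>
      h.noncrossing b (mem_insert_of_mem hb) c (mem_insert_self c d)
    refine ⟨⟨fun b hb => h.fst_lt_snd b (mem_insert_of_mem hb), fun b hb b' hb' =>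
      h.noncrossing b (mem_insert_of_mem hb) b' (mem_insert_of_mem hb'), fun b hb => ?_⟩,
      h.fst_lt_snd c (mem_insert_self c d), hcross, ?_⟩
    · rw [← hc.below_insert hb]
      exact h.card_gap b (mem_insert_of_mem hb)
    · rw [← hc.sdiff_covered_below hcross, ← below_insert_self]
      exact h.card_gap c (mem_insert_self c d)
  · rintro ⟨h, hlt, hcross, hgap⟩
    refine ⟨forall_mem_insert .. |>.2 ⟨hlt, h.fst_lt_snd⟩, forall_mem_insert .. |>.2 ⟨?_, ?_⟩,
      forall_mem_insert .. |>.2 ⟨?_, fun b hb => ?_⟩⟩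
    · exact forall_mem_insert .. |>.2
        ⟨not_crosses_self, fun b hb => crosses_comm c b |>.not.2 (hcross b hb)⟩
    · exact fun b hb => forall_mem_insert .. |>.2 ⟨hcross b hb, h.noncrossing b hb⟩
    · rw [below_insert_self, hc.sdiff_covered_below hcross, hgap]
    · rw [hc.below_insert hb, h.card_gap b hb]

theorem IsGapForest.outermost_induction {motive : Finset (ℕ × ℕ) → Prop} (empty : motive ∅)
    (insert : ∀ c d, Outermost d c → IsGapForest (insert c d) → motive d → motive (insert c d))
    (h : IsGapForest d) : motive d := by
  induction d using Finset.induction_on_max_value (fun c : ℕ × ℕ => c.2 - c.1) with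
  | empty => exact empty
  | insert c d hcd hmax ih =>
    have hc : Outermost d c := fun b hb hbc => by
      have hlength := hmax b hb
      have hclt := h.fst_lt_snd c (mem_insert_self c d)
      have hbc : b = c := Prod.ext (by omega) (by omega)
      exact hcd (hbc ▸ hb)
    exact insert c d hc h (ih ((isGapForest_insert_iff hc).1 h).1)

theorem IsGapForest.card_covered (h : IsGapForest d) : #(covered d) = #d := by
  refine h.outermost_induction (motive := fun d => #(covered d) = #d) (by simp [covered])
    fun c d hc h ih => ?_
  obtain ⟨-, -, -, hgap⟩ := (isGapForest_insert_iff hc).1 h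
  rw [covered_insert, ← card_sdiff_add_card, hgap, ih, card_insert_of_notMem hc.notMem, add_comm]

theorem covered_subset_range {t : ℕ} (ht : ∀ c ∈ d, c.2 ≤ t) : covered d ⊆ range t := by
  intro x hx
  obtain ⟨c, hc, -, hxc⟩ := mem_covered.1 hx
  exact mem_range.2 (hxc.trans_le (ht c hc))

theorem IsGapForest.filter_snd_le (h : IsGapForest d) (s : ℕ) :
    IsGapForest {c ∈ d | c.2 ≤ s} := by
  have hsub : ∀ c ∈ {c ∈ d | c.2 ≤ s}, c ∈ d := fun c hc => (mem_filter.1 hc).1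
  refine ⟨fun c hc => h.fst_lt_snd c (hsub c hc), fun c hc c' hc' =>
    h.noncrossing c (hsub c hc) c' (hsub c' hc'), fun c hc => ?_⟩
  have hbelow : below {c ∈ d | c.2 ≤ s} c = below d c := by
    ext b
    have hcs := (mem_filter.1 hc).2
    simp only [mem_below, mem_filter]
    exact ⟨fun h => ⟨h.1.1, h.2⟩, fun h => ⟨⟨h.1, h.2.2.2.trans hcs⟩, h.2⟩⟩
  rw [hbelow, h.card_gap c (hsub c hc)]

theorem IsGapForest.card_snd_le_le (h : IsGapForest d) (s : ℕ) : #{c ∈ d | c.2 ≤ s} ≤ s := by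
  rw [← (h.filter_snd_le s).card_covered]
  simpa using card_le_card (covered_subset_range fun c hc => (mem_filter.1 hc).2)

end Geometry

/-! ### Gap forests and noncrossing trees -/

section Graph

variable {d d' : Finset (ℕ × ℕ)} {b c : ℕ × ℕ} {u v x n : ℕ}

theorem chordGraph_adj :
    (chordGraph d).Adj u v ↔ (∃ c ∈ d, s(u, v) = s(c.1, c.2)) ∧ u ≠ v := by
  simp [chordGraph]

theorem chordGraph_mono (h : d ⊆ d') : chordGraph d ≤ chordGraph d' :=
  SimpleGraph.fromEdgeSet_mono fun _ ⟨c, hc, he⟩ => ⟨c, h hc, he⟩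

theorem chordGraph_insert :
    chordGraph (insert c d) = chordGraph d ⊔ SimpleGraph.edge c.1 c.2 := by
  ext u v
  simp only [chordGraph_adj, SimpleGraph.sup_adj, SimpleGraph.edge_adj, exists_mem_insert,
    Sym2.eq_iff]
  rw [or_and_right, or_comm]

theorem mem_covered_of_reachable (hlt : ∀ c ∈ d, c.1 < c.2) (h : (chordGraph d).Reachable u v)
    (hux : u ≤ x) (hxv : x < v) : x ∈ covered d := by
  obtain ⟨p⟩ := h
  induction p with
  | nil => omega
  | @cons u w v hadj _ ih =>
    rcases le_or_gt w x with hwx | hxw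
    · exact ih hwx hxv
    · obtain ⟨⟨c, hc, he⟩, -⟩ := chordGraph_adj.1 hadj
      have := hlt c hc
      rw [Sym2.eq_iff] at he
      exact mem_covered.2 ⟨c, hc, by omega, by omega⟩

theorem IsGapForest.isAcyclic (h : IsGapForest d) : (chordGraph d).IsAcyclic := by
  refine h.outermost_induction (motive := fun d => (chordGraph d).IsAcyclic) ?_
    fun c d hc h ih => ?_
  · simp [chordGraph]
  · obtain ⟨hforest, -, -, hgap⟩ := (isGapForest_insert_iff hc).1 h
    obtain ⟨x, hx⟩ := card_pos.1 (hgap ▸ one_pos)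
    rw [mem_sdiff, mem_Ico] at hx
    rw [chordGraph_insert]
    exact ih.sup_edge_of_not_reachable fun hr =>
      hx.2 (mem_covered_of_reachable hforest.fst_lt_snd hr hx.1.1 hx.1.2)

/-- A path leaving the span of a chord `c` passes through an endpoint of `c`, since chords of `d`
do not cross `c`. -/
theorem reachable_below_endpoint (hlt : ∀ b ∈ d, b.1 < b.2)
    (hcross : ∀ b ∈ d, ¬ Crosses allMinus b c)
    (h : (chordGraph d).Reachable u v) (hcu : c.1 ≤ u) (huc : u ≤ c.2)
    (hv : ¬ (c.1 < v ∧ v < c.2)) :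
    (chordGraph (below d c)).Reachable u c.1 ∨ (chordGraph (below d c)).Reachable u c.2 := by
  obtain ⟨p⟩ := h
  induction p with
  | @nil u =>
    rcases (show u = c.1 ∨ u = c.2 by omega) with rfl | rfl
    · exact .inl .rfl
    · exact .inr .rfl
  | @cons u w v hadj _ ih =>
    by_cases hu : u = c.1 ∨ u = c.2
    · rcases hu with rfl | rfl
      · exact .inl .rfl
      · exact .inr .rfl
    obtain ⟨⟨b, hb, he⟩, huw⟩ := chordGraph_adj.1 hadj
    have hblt := hlt b hb
    have hbc := mt crosses_allMinus.2 (hcross b hb)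
    rw [Sym2.eq_iff] at he
    have hb' : b ∈ below d c := mem_below.2 ⟨hb, by rintro rfl; omega, by omega, by omega⟩
    have hadj' : (chordGraph (below d c)).Adj u w :=
      chordGraph_adj.2 ⟨⟨b, hb', Sym2.eq_iff.2 he⟩, huw⟩
    exact (ih (by omega) (by omega) hv).imp hadj'.reachable.trans hadj'.reachable.trans

theorem not_reachable_below (hlt : ∀ c ∈ d, c.1 < c.2) (hac : (chordGraph d).IsAcyclic)
    (hc : c ∈ d) : ¬ (chordGraph (below d c)).Reachable c.1 c.2 := by
  have hadj : (chordGraph d).Adj c.1 c.2 := chordGraph_adj.2 ⟨⟨c, hc, rfl⟩, (hlt c hc).ne⟩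
  have hbridge := SimpleGraph.isAcyclic_iff_forall_adj_isBridge.1 hac hadj
  refine fun hr => SimpleGraph.isBridge_iff.1 hbridge (hr.mono fun u v huv => ?_)
  rw [SimpleGraph.deleteEdges_adj]
  refine ⟨chordGraph_mono (filter_subset _ _) huv, ?_⟩
  obtain ⟨⟨b, hb, he⟩, -⟩ := chordGraph_adj.1 huv
  obtain ⟨hbd, hbc, -⟩ := mem_below.1 hb
  have hblt := hlt b hbd
  have hclt := hlt c hc
  rw [he, Set.mem_singleton_iff, Sym2.eq_iff]
  exact fun h => hbc (Prod.ext (by omega) (by omega))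

theorem notMem_covered_of_last_reachable (hlt : ∀ c ∈ d, c.1 < c.2)
    (hcross : ∀ c ∈ d, ∀ c' ∈ d, ¬ Crosses allMinus c c') (hu : ∀ c ∈ d, u ≤ c.1)
    (hxu : (chordGraph d).Reachable x u)
    (hlast : ∀ c ∈ d, (chordGraph d).Reachable c.2 u → c.2 ≤ x) : x ∉ covered d := by
  intro hx
  obtain ⟨c, hc, hcx, hxc⟩ := mem_covered.1 hx
  have hadj : (chordGraph d).Adj c.1 c.2 := chordGraph_adj.2 ⟨⟨c, hc, rfl⟩, (hlt c hc).ne⟩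
  have hle : chordGraph (below d c) ≤ chordGraph d := chordGraph_mono (filter_subset _ _)
  have hxc_reach : (chordGraph d).Reachable x c.2 := by
    have huc := hu c hc
    rcases reachable_below_endpoint hlt (fun b hb => hcross b hb c hc) hxu hcx hxc.le
      (by omega) with h | h
    · exact (h.mono hle).trans hadj.reachable
    · exact h.mono hle
  exact hxc.not_ge (hlast c hc (hxc_reach.symm.trans hxu))

/-- The gap of `c` lies right of the last vertex joined to `c.1` by chords nested in `c`. -/
theorem card_sdiff_covered_below (hlt : ∀ c ∈ d, c.1 < c.2)
    (hcross : ∀ c ∈ d, ∀ c' ∈ d, ¬ Crosses allMinus c c')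
    (hac : (chordGraph d).IsAcyclic) (hc : c ∈ d)
    (hconn : ∀ y, c.1 ≤ y → y ≤ c.2 → (chordGraph d).Reachable y c.1) :
    #(Ico c.1 c.2 \ covered (below d c)) = 1 := by
  classical
  have hsub : ∀ b ∈ below d c, b ∈ d := fun b hb => (mem_below.1 hb).1
  have hlt' : ∀ b ∈ below d c, b.1 < b.2 := fun b hb => hlt b (hsub b hb)
  have hclt := hlt c hc
  obtain ⟨x, hx, hlast⟩ := exists_max_image
    {y ∈ Icc c.1 c.2 | (chordGraph (below d c)).Reachable y c.1} id
    ⟨c.1, by simp [hclt.le]⟩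
  simp only [mem_filter, mem_Icc, id] at hx hlast
  obtain ⟨⟨hcx, hxc⟩, hxr⟩ := hx
  have hxc : x < c.2 := hxc.lt_of_ne fun hxc =>
    not_reachable_below hlt hac hc (hxc ▸ hxr.symm)
  have hx_gap : x ∉ covered (below d c) :=
    notMem_covered_of_last_reachable hlt' (fun b hb b' hb' => hcross b (hsub b hb) b' (hsub b' hb'))
      (fun b hb => (mem_below.1 hb).2.2.1) hxr fun b hb hbr => by
        obtain ⟨-, -, hcb, hbc⟩ := mem_below.1 hb
        exact hlast b.2 ⟨⟨hcb.trans (hlt' b hb).le, hbc⟩, hbr⟩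
  have hx_succ : (chordGraph (below d c)).Reachable (x + 1) c.2 := by
    refine (reachable_below_endpoint hlt (fun b hb => hcross b hb c hc)
      (hconn (x + 1) (by omega) hxc) (by omega) hxc (by omega)).resolve_left fun hr => ?_
    have := hlast (x + 1) ⟨⟨by omega, hxc⟩, hr⟩
    omega
  refine card_eq_one.2 ⟨x, eq_singleton_iff_unique_mem.2
    ⟨mem_sdiff.2 ⟨mem_Ico.2 ⟨hcx, hxc⟩, hx_gap⟩, fun y hy => ?_⟩⟩
  obtain ⟨hy, hy_gap⟩ := mem_sdiff.1 hy
  obtain ⟨hcy, hyc⟩ := mem_Ico.1 hy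
  rcases lt_trichotomy y x with hyx | hyx | hxy
  · exact (hy_gap (mem_covered_of_reachable hlt' hxr.symm hcy hyx)).elim
  · exact hyx
  · exact (hy_gap (mem_covered_of_reachable hlt' hx_succ hxy hyc)).elim

theorem connected_of_isAcyclic_of_card_le {V : Type*} [Fintype V] [Nonempty V]
    {G : SimpleGraph V} [Fintype G.edgeSet] (hac : G.IsAcyclic)
    (hcard : Fintype.card V ≤ #G.edgeFinset + 1) : G.Connected := by
  classical
  obtain ⟨T, hGT, -, hT⟩ :=
    SimpleGraph.connected_top.exists_isTree_le_of_le_of_isAcyclic (le_top (a := G)) hac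
  have hTcard := hT.card_edgeFinset
  have hGT : G = T := SimpleGraph.edgeFinset_inj.1
    (eq_of_subset_of_card_le (SimpleGraph.edgeFinset_mono hGT) (by omega))
  exact hGT ▸ hT.connected

theorem IsDiagram.reachable {ε : ℕ → Bool} (h : IsDiagram n ε d) (hcard : #d = n)
    (hu : u ≤ n) (hv : v ≤ n) : (chordGraph d).Reachable u v := by
  classical
  obtain ⟨hvalid, -, hac⟩ := h
  have hval (x : ℕ) (hx : x ≤ n) : (Fin.ofNat (n + 1) x : ℕ) = x :=
    Nat.mod_eq_of_lt (Nat.lt_succ_of_le hx)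
  let G : SimpleGraph (Fin (n + 1)) := (chordGraph d).comap Fin.valEmbedding
  let edge : ℕ × ℕ → Sym2 (Fin (n + 1)) := fun c => s(Fin.ofNat (n + 1) c.1, Fin.ofNat (n + 1) c.2)
  have hedge_val : ∀ c ∈ d, (edge c).map Fin.val = s(c.1, c.2) := fun c hc => by
    obtain ⟨hlt, hle⟩ := hvalid c hc
    rw [Sym2.map_mk, hval c.1 (hlt.le.trans hle), hval c.2 hle]
  have hedge_injOn : Set.InjOn edge d := by
    intro c hc c' hc' he
    have hlt := (hvalid c hc).1
    have hlt' := (hvalid c' hc').1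
    have hs : s(c.1, c.2) = s(c'.1, c'.2) := by rw [← hedge_val c hc, he, hedge_val c' hc']
    rw [Sym2.eq_iff] at hs
    exact Prod.ext (by omega) (by omega)
  have hedge_mem : d.image edge ⊆ G.edgeFinset := image_subset_iff.2 fun c hc => by
    obtain ⟨hlt, hle⟩ := hvalid c hc
    rw [SimpleGraph.mem_edgeFinset, SimpleGraph.mem_edgeSet, SimpleGraph.comap_adj,
      Fin.valEmbedding_apply, hval c.1 (hlt.le.trans hle), hval c.2 hle]
    exact chordGraph_adj.2 ⟨⟨c, hc, rfl⟩, hlt.ne⟩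
  have hcardG : n ≤ #G.edgeFinset :=
    calc n = #(d.image edge) := by rw [card_image_of_injOn hedge_injOn, hcard]
      _ ≤ #G.edgeFinset := card_le_card hedge_mem
  have hG : G.Connected := connected_of_isAcyclic_of_card_le (hac.of_comap _) (by simpa)
  have hr := hG ⟨u, Nat.lt_succ_of_le hu⟩ ⟨v, Nat.lt_succ_of_le hv⟩
  exact hr.map (SimpleGraph.Hom.comap _ (chordGraph d))

theorem IsDiagram.isGapForest (h : IsDiagram n allMinus d) (hcard : #d = n) : IsGapForest d where
  fst_lt_snd c hc := (h.1 c hc).1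
  noncrossing := h.2.1
  card_gap c hc := card_sdiff_covered_below (fun c hc => (h.1 c hc).1) h.2.1 h.2.2 hc
    fun y _ hy => by
      have := h.1 c hc
      exact h.reachable hcard (by omega) (by omega)

theorem IsGapForest.isDiagram (h : IsGapForest d) (hle : ∀ c ∈ d, c.2 ≤ n) :
    IsDiagram n allMinus d :=
  ⟨fun c hc => ⟨h.fst_lt_snd c hc, hle c hc⟩, h.noncrossing, h.isAcyclic⟩

end Graph

/-! ### Ballot functions -/

section Ballot

variable {α : Type*} {L : Finset α} {f : α → ℕ} {l : α} {t : ℕ}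

/-- At most `s` values of `f` on `L` are `≤ s`, for every `s`. If `L` has `n` elements and `f ≤ n`
on `L`, this says that `n + 1 - f` is a parking function. -/
def IsBallot (L : Finset α) (f : α → ℕ) : Prop := ∀ s, #{a ∈ L | f a ≤ s} ≤ s

/-- The ballot functions `L → {1, …, t}`, extended by `0` outside `L`. -/
def ballotFunctions (t : ℕ) (L : Finset α) : Set (α → ℕ) :=
  {f | (∀ a, f a ≤ t) ∧ Function.support f = L ∧ IsBallot L f}

theorem IsBallot.mono {L' : Finset α} (hf : IsBallot L f) (hL : L' ⊆ L) : IsBallot L' f :=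
  fun s => (card_le_card (filter_subset_filter _ hL)).trans (hf s)

theorem IsBallot.card_le (hf : IsBallot L f) (ht : ∀ a ∈ L, f a ≤ t) : #L ≤ t := by
  simpa only [filter_true_of_mem ht] using hf t

theorem IsBallot.card_lt_of_insert [DecidableEq α] (hf : IsBallot (insert l L) f) (hl : l ∉ L)
    (hle : ∀ a ∈ L, f a ≤ f l) : #L < f l := by
  have hcard := hf.card_le (forall_mem_insert .. |>.2 ⟨le_rfl, hle⟩)
  rwa [card_insert_of_notMem hl] at hcard

theorem IsBallot.ne_zero {a : α} (hf : IsBallot L f) (ha : a ∈ L) : f a ≠ 0 := fun h =>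
  (filter_eq_empty_iff.1 (card_eq_zero.1 (Nat.le_zero.1 (hf 0)))) ha h.le

/-- Replaces the values above `t` by `0`; the support shrinks accordingly. -/
def truncate (t : ℕ) (f : α → ℕ) : α → ℕ := fun a => if f a ≤ t then f a else 0

theorem truncate_mem_ballotFunctions (hf : f ∈ ballotFunctions (t + 1) L) :
    truncate t f ∈ ballotFunctions t {a ∈ L | f a ≤ t} := by
  obtain ⟨-, hsupp, hballot⟩ := hf
  refine ⟨fun a => ?_, Set.ext fun a => ?_, fun s => (card_le_card fun a ha => ?_).trans
    (hballot s)⟩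
  · unfold truncate
    split_ifs with ha
    exacts [ha, zero_le]
  · simp [truncate, ← mem_coe, ← hsupp, and_comm]
  · obtain ⟨ha, hs⟩ := mem_filter.1 ha
    obtain ⟨ha, hat⟩ := mem_filter.1 ha
    exact mem_filter.2 ⟨ha, by rwa [truncate, if_pos hat] at hs⟩

theorem injOn_truncate : Set.InjOn (truncate t) (ballotFunctions (t + 1) L) := by
  rintro f ⟨hle, hsupp, -⟩ f' ⟨hle', hsupp', -⟩ heq
  ext a
  have hfa : f a = 0 ↔ f' a = 0 := not_iff_not.1 (Set.ext_iff.1 (hsupp.trans hsupp'.symm) a)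
  have hta := congrFun heq a
  have hfa_le := hle a
  have hfa_le' := hle' a
  simp only [truncate] at hta
  split_ifs at hta <;> omega

theorem exists_truncate_eq {Q : Finset α} (hQL : Q ⊆ L) (hcard : #L ≤ t + 1)
    (hf : f ∈ ballotFunctions t Q) : ∃ f' ∈ ballotFunctions (t + 1) L, truncate t f' = f := by
  classical
  obtain ⟨hle, hsupp, hballot⟩ := hf
  have hzero : ∀ a, f a = 0 ↔ a ∉ Q := fun a => by
    rw [← mem_coe, ← hsupp, Function.notMem_support]
  refine ⟨fun a => if a ∈ L \ Q then t + 1 else f a,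
    ⟨fun a => ?_, Set.ext fun a => ?_, fun s => ?_⟩, funext fun a => ?_⟩
  · have hfa := hle a
    dsimp only
    split_ifs <;> omega
  · have := @hQL a
    by_cases haL : a ∈ L <;> by_cases haQ : a ∈ Q <;> simp_all
  · rcases lt_or_ge t s with hts | hst
    · exact (card_le_card (filter_subset _ L)).trans (hcard.trans hts)
    · refine (card_le_card fun a ha => ?_).trans (hballot s)
      simp only [mem_filter] at ha ⊢
      obtain ⟨haL, has⟩ := ha
      split_ifs at has with haQ
      · omega
      · exact ⟨by_contra fun h => haQ (mem_sdiff.2 ⟨haL, h⟩), has⟩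
  · by_cases haQ : a ∈ L \ Q
    · simp [truncate, haQ, (hzero a).2 (mem_sdiff.1 haQ).2]
    · simp [truncate, haQ, hle a]

theorem finite_ballotFunctions [Finite α] : (ballotFunctions t L).Finite :=
  (Set.Finite.pi' fun _ : α => Set.finite_Iic t).subset fun _ hf => hf.1

theorem ncard_ballotFunctions_succ [Finite α] (hcard : #L ≤ t + 1) :
    (ballotFunctions (t + 1) L).ncard = ∑ Q ∈ L.powerset, (ballotFunctions t Q).ncard := by
  have hbij : Set.BijOn (truncate t) (ballotFunctions (t + 1) L)
      (⋃ Q ∈ (L.powerset : Set (Finset α)), ballotFunctions t Q) := by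
    refine ⟨fun f hf => ?_, injOn_truncate, fun f hf => ?_⟩
    · exact Set.mem_biUnion (mem_coe.2 (mem_powerset.2 (filter_subset _ L)))
        (truncate_mem_ballotFunctions hf)
    · obtain ⟨Q, hQ, hf⟩ := Set.mem_iUnion₂.1 hf
      exact exists_truncate_eq (mem_powerset.1 (mem_coe.1 hQ)) hcard hf
  have hdisj : Set.PairwiseDisjoint (L.powerset : Set (Finset α)) (ballotFunctions t) :=
    fun Q _ Q' _ hQ => Set.disjoint_left.2 fun f hf hf' =>
      hQ (coe_injective (hf.2.1.symm.trans hf'.2.1))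
  rw [hbij.ncard_eq, (finite_toSet _).ncard_biUnion (fun _ _ => finite_ballotFunctions) hdisj,
    finsum_mem_coe_finset]

theorem ballotFunctions_eq_empty (hcard : t < #L) : ballotFunctions t L = ∅ :=
  Set.eq_empty_of_forall_notMem fun _ hf => hcard.not_ge (hf.2.2.card_le fun a _ => hf.1 a)

theorem ballotFunctions_empty : ballotFunctions t (∅ : Finset α) = {0} := by
  ext f
  simp only [ballotFunctions, IsBallot]
  constructor
  · exact fun hf => Function.support_eq_empty_iff.1 (hf.2.1.trans coe_empty)
  · rintro rfl
    simp

/-- The derivative of the binomial identity `∑ Q ⊆ L, x ^ #Q = (x + 1) ^ #L`. -/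
theorem sum_powerset_card_mul_pow {R : Type*} [CommSemiring R] (L : Finset α) (x : R) :
    ∑ Q ∈ L.powerset, #Q * x ^ (#Q - 1) = #L * (x + 1) ^ (#L - 1) := by
  classical
  have mul_pow_pred (k : ℕ) (y : R) : k * y ^ (k - 1) * y = k * y ^ k := by
    cases k <;> simp [pow_succ, mul_assoc]
  induction L using Finset.induction_on with
  | empty => simp
  | insert a L ha ih =>
    have hsum : ∑ Q ∈ L.powerset, (#(insert a Q) : R) * x ^ (#(insert a Q) - 1) =
        ∑ Q ∈ L.powerset, (#Q * x ^ (#Q - 1) * x + x ^ #Q) := sum_congr rfl fun Q hQ => by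
      rw [card_insert_of_notMem fun haQ => ha (mem_powerset.1 hQ haQ), mul_pow_pred,
        Nat.add_sub_cancel, Nat.cast_succ, add_mul, one_mul]
    have hpow : ∑ Q ∈ L.powerset, x ^ #Q = (x + 1) ^ #L := by
      simpa using sum_pow_mul_eq_add_pow x 1 L
    rw [sum_powerset_insert ha, hsum, sum_add_distrib, ← sum_mul, ih, hpow,
      card_insert_of_notMem ha, Nat.add_sub_cancel, Nat.cast_succ, ← add_assoc, ← mul_one_add,
      add_comm 1 x, mul_pow_pred, add_mul, one_mul]

/-- The number of ballot functions is `(t + 1 - #L) * (t + 1) ^ (#L - 1)`, here without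
subtraction. -/
theorem ncard_ballotFunctions_add [Finite α] (hcard : #L ≤ t + 1) :
    (ballotFunctions t L).ncard + #L * (t + 1) ^ (#L - 1) = (t + 1) ^ #L := by
  induction t generalizing L with
  | zero =>
    rcases L.eq_empty_or_nonempty with rfl | hL
    · simp [ballotFunctions_empty]
    · have hcard : #L = 1 := hcard.antisymm hL.card_pos
      simp [ballotFunctions_eq_empty (t := 0) (L := L) (by omega), hcard]
  | succ t ih =>
    rcases hcard.lt_or_eq with hcard | hcard
    · have hsum := calc
        ∑ Q ∈ L.powerset, ((ballotFunctions t Q).ncard + #Q * (t + 1) ^ (#Q - 1))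
          = ∑ Q ∈ L.powerset, (t + 1) ^ #Q := sum_congr rfl fun Q hQ =>
            ih ((card_le_card (mem_powerset.1 hQ)).trans (Nat.lt_succ_iff.1 hcard))
        _ = (t + 1 + 1) ^ #L := by simpa using sum_pow_mul_eq_add_pow (t + 1) 1 L
      rw [sum_add_distrib] at hsum
      rw [ncard_ballotFunctions_succ (Nat.lt_succ_iff.1 hcard), ← hsum]
      exact congrArg _ (sum_powerset_card_mul_pow L (t + 1)).symm
    · rw [ballotFunctions_eq_empty (by omega), Set.ncard_empty, zero_add, hcard,
        Nat.add_sub_cancel, ← pow_succ']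

end Ballot

/-! ### The roof of a gap forest -/

section Roof

variable {d : Finset (ℕ × ℕ)} {v x : ℕ}

/-- The vertex `v` lies on the roof of `d` ending at the uncovered cell `x`: every cell between `v`
and `x` is covered and no chord passes over `v`. The roof vertices are linked by outermost
chords. -/
structure OnRoof (d : Finset (ℕ × ℕ)) (x v : ℕ) : Prop where
  le : v ≤ x
  subset_covered : Ico v x ⊆ covered d
  not_straddled : ∀ c ∈ d, ¬ (c.1 < v ∧ v < c.2)

theorem onRoof_self (hx : x ∉ covered d) : OnRoof d x x :=
  ⟨le_rfl, by simp, fun c hc h => hx (mem_covered.2 ⟨c, hc, h.1.le, h.2⟩)⟩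

theorem OnRoof.exists_fst_eq (hv : OnRoof d x v) (hvx : v < x) (hx : x ∉ covered d)
    (hcross : ∀ c ∈ d, ∀ c' ∈ d, ¬ Crosses allMinus c c') :
    ∃ c ∈ d, c.1 = v ∧ v < c.2 ∧ OnRoof d x c.2 := by
  obtain ⟨b, hb, hbv, hvb⟩ := mem_covered.1 (hv.subset_covered (mem_Ico.2 ⟨le_rfl, hvx⟩))
  have hbv : b.1 = v := hbv.eq_of_not_lt fun h => hv.not_straddled b hb ⟨h, hvb⟩
  obtain ⟨c, hc, hlongest⟩ := exists_max_image {c ∈ d | c.1 = v} Prod.snd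
    ⟨b, mem_filter.2 ⟨hb, hbv⟩⟩
  simp only [mem_filter, and_imp] at hc hlongest
  obtain ⟨hc, hcv⟩ := hc
  have hvc : v < c.2 := hvb.trans_le (hlongest b hb hbv)
  refine ⟨c, hc, hcv, hvc, ⟨?_, ?_, fun e he => ?_⟩⟩
  · exact not_lt.1 fun hxc => hx (mem_covered.2 ⟨c, hc, hcv.trans_le hvx.le, hxc⟩)
  · exact (Ico_subset_Ico_left hvc.le).trans hv.subset_covered
  · have hlong := hlongest e he
    have hstraddle := hv.not_straddled e he
    have hce := mt crosses_allMinus.2 (hcross c hc e he)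
    omega

theorem OnRoof.exists_snd_eq (hv : OnRoof d x v)
    (hcross : ∀ c ∈ d, ∀ c' ∈ d, ¬ Crosses allMinus c c') (hlt : ∀ c ∈ d, c.1 < c.2)
    (hend : ∃ b ∈ d, b.2 = v) :
    ∃ c ∈ d, c.2 = v ∧ OnRoof d x c.1 ∧ ∀ b ∈ d, b.2 = v → c.1 ≤ b.1 := by
  obtain ⟨b, hb, hbv⟩ := hend
  obtain ⟨c, hc, hlongest⟩ := exists_min_image {c ∈ d | c.2 = v} Prod.fst
    ⟨b, mem_filter.2 ⟨hb, hbv⟩⟩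
  simp only [mem_filter, and_imp] at hc hlongest
  obtain ⟨hc, hcv⟩ := hc
  have hclt := hlt c hc
  have hvx := hv.le
  refine ⟨c, hc, hcv, ⟨by omega, fun y hy => ?_, fun e he => ?_⟩, hlongest⟩
  · rw [mem_Ico] at hy
    rcases lt_or_ge y v with hyv | hvy
    · exact mem_covered.2 ⟨c, hc, hy.1, hyv.trans_eq hcv.symm⟩
    · exact hv.subset_covered (mem_Ico.2 ⟨hvy, hy.2⟩)
  · have hlong := hlongest e he
    have hstraddle := hv.not_straddled e he
    have hce := mt crosses_allMinus.2 (hcross c hc e he)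
    omega

end Roof

/-! ### Labelled forests -/

section Labelled

variable {α : Type*} [LinearOrder α] {L : Finset α} {f : α → ℕ} {g g' : α → ℕ × ℕ}
  {l : α} {c : ℕ × ℕ} {v v' x t : ℕ}

/-- `g` enumerates the chords of a gap forest by the labels in `L` so that labels increase in the
clockwise direction, i.e. `g` is the inverse of a linear extension. -/
structure IsLabelledForest (L : Finset α) (g : α → ℕ × ℕ) : Prop where
  injOn : Set.InjOn g L
  isGapForest : IsGapForest (L.image g)
  lt_of_cw : ∀ a ∈ L, ∀ b ∈ L, Cw allMinus (g b) (g a) → a < b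

/-- The chord `c` can be added with label `l` to the labelled forest `g`, assuming that `c` ends at
or beyond all chords of `g` and that `l` exceeds the labels of those ending at `c.2`. -/
structure IsSlot (L : Finset α) (g : α → ℕ × ℕ) (l : α) (c : ℕ × ℕ) : Prop where
  fst_lt_snd : c.1 < c.2
  not_straddled : ∀ a ∈ L, ¬ ((g a).1 < c.1 ∧ c.1 < (g a).2)
  card_gap : #(Ico c.1 c.2 \ covered (L.image g)) = 1
  lt_of_fst_eq : ∀ a ∈ L, (g a).1 = c.1 → l < a
  lt_of_snd_eq : ∀ a ∈ L, (g a).2 = c.1 → a < l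

theorem IsLabelledForest.congr (h : IsLabelledForest L g) (hg : Set.EqOn g g' L) :
    IsLabelledForest L g' where
  injOn := h.injOn.congr hg
  isGapForest := image_congr hg ▸ h.isGapForest
  lt_of_cw a ha b hb := hg ha ▸ hg hb ▸ h.lt_of_cw a ha b hb

theorem IsSlot.congr (h : IsSlot L g l c) (hg : Set.EqOn g g' L) : IsSlot L g' l c where
  fst_lt_snd := h.fst_lt_snd
  not_straddled a ha := hg ha ▸ h.not_straddled a ha
  card_gap := image_congr hg ▸ h.card_gap
  lt_of_fst_eq a ha := hg ha ▸ h.lt_of_fst_eq a ha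
  lt_of_snd_eq a ha := hg ha ▸ h.lt_of_snd_eq a ha

theorem IsLabelledForest.subset {L' : Finset α} (h : IsLabelledForest L g) (hL : L' ⊆ L)
    (hforest : IsGapForest (L'.image g)) : IsLabelledForest L' g where
  injOn := h.injOn.mono (coe_subset.2 hL)
  isGapForest := hforest
  lt_of_cw a ha b hb := h.lt_of_cw a (hL ha) b (hL hb)

theorem IsLabelledForest.isBallot_snd (h : IsLabelledForest L g) :
    IsBallot L fun a => (g a).2 := by
  intro s
  have hcard := h.isGapForest.card_snd_le_le s
  rwa [filter_image, card_image_of_injOn (h.injOn.mono (coe_subset.2 (filter_subset _ _)))] at hcard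

theorem IsLabelledForest.outermost (h : IsLabelledForest (insert l L) g) (hl : l ∉ L)
    (hle : ∀ a ∈ L, (g a).2 ≤ (g l).2) (htie : ∀ a ∈ L, (g a).2 = (g l).2 → a < l) :
    Outermost (L.image g) (g l) := by
  refine forall_mem_image.2 fun a ha ⟨hfst, hsnd⟩ => ?_
  have hsnd := (hle a ha).antisymm hsnd
  have hal := htie a ha hsnd
  rcases hfst.eq_or_lt with hfst | hfst
  · have : a = l := h.injOn (by simp [ha]) (by simp) (Prod.ext hfst hsnd)
    exact hl (this ▸ ha)
  · exact hal.asymm (h.lt_of_cw l (by simp) a (by simp [ha])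
      (cw_allMinus.2 (.inr (.inr ⟨hsnd.symm, hfst⟩))))

theorem IsSlot.outermost (h : IsSlot L g l c) (hle : ∀ a ∈ L, (g a).2 ≤ c.2)
    (htie : ∀ a ∈ L, (g a).2 = c.2 → a < l) : Outermost (L.image g) c := by
  refine forall_mem_image.2 fun a ha ⟨hfst, hsnd⟩ => ?_
  have hclt := h.fst_lt_snd
  have hfst : (g a).1 = c.1 := hfst.eq_of_not_lt fun hlt =>
    h.not_straddled a ha ⟨hlt, hclt.trans_le hsnd⟩
  exact (htie a ha ((hle a ha).antisymm hsnd)).asymm (h.lt_of_fst_eq a ha hfst)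

theorem IsLabelledForest.and_isSlot_of_insert (h : IsLabelledForest (insert l L) g) (hl : l ∉ L)
    (hle : ∀ a ∈ L, (g a).2 ≤ (g l).2) (htie : ∀ a ∈ L, (g a).2 = (g l).2 → a < l) :
    IsLabelledForest L g ∧ IsSlot L g l (g l) := by
  have hout := h.outermost hl hle htie
  obtain ⟨hforest, hlt, hcross, hgap⟩ :=
    (isGapForest_insert_iff hout).1 (image_insert g l L ▸ h.isGapForest)
  refine ⟨h.subset (subset_insert l L) hforest, hlt, fun a ha => ?_, hgap, fun a ha hfst => ?_,
    fun a ha hsnd => ?_⟩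
  · have hout := hout (g a) (mem_image_of_mem g ha)
    have hcross := mt crosses_allMinus.2 (hcross (g a) (mem_image_of_mem g ha))
    omega
  · have hout := hout (g a) (mem_image_of_mem g ha)
    exact h.lt_of_cw l (by simp) a (by simp [ha]) (cw_allMinus.2 (by omega))
  · exact h.lt_of_cw a (by simp [ha]) l (by simp) (cw_allMinus.2 (.inl hsnd))

theorem IsSlot.isLabelledForest_insert (hslot : IsSlot L g l (g l)) (h : IsLabelledForest L g)
    (hl : l ∉ L) (hle : ∀ a ∈ L, (g a).2 ≤ (g l).2) (htie : ∀ a ∈ L, (g a).2 = (g l).2 → a < l) :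
    IsLabelledForest (insert l L) g := by
  have hout := hslot.outermost hle htie
  have hlt := hslot.fst_lt_snd
  refine ⟨?_, ?_, ?_⟩
  · rw [coe_insert, Set.injOn_insert (mem_coe.not.2 hl), ← coe_image]
    exact ⟨h.injOn, hout.notMem⟩
  · rw [image_insert, isGapForest_insert_iff hout]
    refine ⟨h.isGapForest, hlt, forall_mem_image.2 fun a ha => ?_, hslot.card_gap⟩
    have hstraddle := hslot.not_straddled a ha
    have hle := hle a ha
    rw [crosses_allMinus]
    omega
  · refine forall_mem_insert .. |>.2 ⟨forall_mem_insert .. |>.2 ⟨fun hcw => ?_, fun a ha hcw => ?_⟩,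
      fun a ha => forall_mem_insert .. |>.2 ⟨fun hcw => ?_, h.lt_of_cw a ha⟩⟩
    all_goals rw [cw_allMinus] at hcw
    · omega
    · have hlta := h.isGapForest.fst_lt_snd (g a) (mem_image_of_mem g ha)
      have hle := hle a ha
      have hstraddle := hslot.not_straddled a ha
      exact hslot.lt_of_fst_eq a ha (by omega)
    · have hle := hle a ha
      rcases hcw with hsnd | hfst | hsnd
      · exact hslot.lt_of_snd_eq a ha hsnd
      · omega
      · exact htie a ha hsnd.1

/-- Labels increase from left to right along the roof. -/
theorem IsLabelledForest.exists_lt_snd_eq (h : IsLabelledForest L g)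
    (hx : x ∉ covered (L.image g)) (hv : OnRoof (L.image g) x v) (hv' : OnRoof (L.image g) x v')
    (hvv' : v < v') (hl : ∀ a ∈ L, (g a).1 = v → l < a) : ∃ a ∈ L, (g a).2 = v' ∧ l < a := by
  induction hk : v' - v using Nat.strong_induction_on generalizing v with
  | _ k ih =>
    obtain ⟨_, hc, hav, hva, hroof⟩ :=
      hv.exists_fst_eq (hvv'.trans_le hv'.le) hx h.isGapForest.noncrossing
    obtain ⟨a, ha, rfl⟩ := mem_image.1 hc
    have hla := hl a ha hav
    have hav' : (g a).2 ≤ v' := not_lt.1 fun hlt =>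
      hv'.not_straddled _ hc ⟨hav.trans_lt hvv', hlt⟩
    rcases hav'.eq_or_lt with hav' | hav'
    · exact ⟨a, ha, hav', hla⟩
    · refine ih (v' - (g a).2) (by omega) hroof hav' (fun b hb hba => hla.trans ?_) rfl
      exact h.lt_of_cw a ha b hb (cw_allMinus.2 (.inl hba.symm))

/-- The vertex `u` is the start of the longest chord ending at `v`. -/
theorem IsLabelledForest.exists_onRoof_lt (h : IsLabelledForest L g)
    (hv : OnRoof (L.image g) x v) (hend : ∃ a ∈ L, (g a).2 = v ∧ l < a) :
    ∃ u < v, OnRoof (L.image g) x u ∧ ∀ a ∈ L, (g a).1 = u → l < a := by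
  obtain ⟨a, ha, hav, hla⟩ := hend
  obtain ⟨_, hc, hbv, hroof, hlongest⟩ := hv.exists_snd_eq h.isGapForest.noncrossing
    h.isGapForest.fst_lt_snd ⟨g a, mem_image_of_mem g ha, hav⟩
  obtain ⟨b, hb, rfl⟩ := mem_image.1 hc
  have hblt := h.isGapForest.fst_lt_snd _ hc
  have hlb : l < b := by
    rcases (hlongest _ (mem_image_of_mem g ha) hav).eq_or_lt with hba | hba
    · rwa [h.injOn hb ha (Prod.ext hba (hbv.trans hav.symm))]
    · exact hla.trans (h.lt_of_cw a ha b hb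
        (cw_allMinus.2 (.inr (.inr ⟨hav.trans hbv.symm, hba⟩))))
  refine ⟨(g b).1, hblt.trans_eq hbv, hroof, fun e he heb => ?_⟩
  have hev : (g e).2 ≤ v := not_lt.1 fun hlt =>
    hv.not_straddled _ (mem_image_of_mem g he) ⟨by omega, hlt⟩
  rcases hev.eq_or_lt with hev | hev
  · rwa [h.injOn he hb (Prod.ext heb (hev.trans hbv.symm))]
  · exact hlb.trans (h.lt_of_cw b hb e he
      (cw_allMinus.2 (.inr (.inl ⟨heb.symm, hev.trans_eq hbv.symm⟩))))

theorem card_Ico_sdiff_eq_one_iff {C : Finset ℕ} {w : ℕ} (hxt : x < t) (hx : x ∉ C)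
    (hC : ∀ y, x < y → y < t → y ∈ C) : #(Ico w t \ C) = 1 ↔ w ≤ x ∧ Ico w x ⊆ C := by
  constructor
  · intro hcard
    obtain ⟨y, hy⟩ := card_eq_one.1 hcard
    have hmem : ∀ z, w ≤ z → z < t → z ∉ C → z = y := fun z hwz hzt hz =>
      mem_singleton.1 (hy ▸ mem_sdiff.2 ⟨mem_Ico.2 ⟨hwz, hzt⟩, hz⟩)
    obtain ⟨hwy, hyC⟩ := mem_sdiff.1 (hy ▸ mem_singleton_self y)
    rw [mem_Ico] at hwy
    have hyx : y ≤ x := not_lt.1 fun hxy => hyC (hC y hxy hwy.2)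
    have hxy := hmem x (hwy.1.trans hyx) hxt hx
    refine ⟨hwy.1.trans hyx, fun z hz => by_contra fun hzC => ?_⟩
    rw [mem_Ico] at hz
    have := hmem z hz.1 (hz.2.trans hxt) hzC
    omega
  · rintro ⟨hwx, hsub⟩
    refine card_eq_one.2 ⟨x, eq_singleton_iff_unique_mem.2
      ⟨mem_sdiff.2 ⟨mem_Ico.2 ⟨hwx, hxt⟩, hx⟩, fun y hy => ?_⟩⟩
    rw [mem_sdiff, mem_Ico] at hy
    rcases lt_trichotomy y x with hyx | hyx | hxy
    · exact (hy.2 (hsub (mem_Ico.2 ⟨hy.1.1, hyx⟩))).elim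
    · exact hyx
    · exact (hy.2 (hC y hxy hy.1.2)).elim

theorem isSlot_iff_onRoof {w : ℕ} (hxt : x < t) (hx : x ∉ covered (L.image g))
    (hcov : ∀ y, x < y → y < t → y ∈ covered (L.image g)) :
    IsSlot L g l (w, t) ↔ OnRoof (L.image g) x w ∧ (∀ a ∈ L, (g a).1 = w → l < a) ∧
      ∀ a ∈ L, (g a).2 = w → a < l := by
  have hgap := card_Ico_sdiff_eq_one_iff (w := w) hxt hx hcov
  constructor
  · intro h
    obtain ⟨hwx, hsub⟩ := hgap.1 h.card_gap
    exact ⟨⟨hwx, hsub, forall_mem_image.2 h.not_straddled⟩, h.lt_of_fst_eq, h.lt_of_snd_eq⟩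
  · rintro ⟨hroof, hfst, hsnd⟩
    exact ⟨hroof.le.trans_lt hxt, fun a ha => hroof.not_straddled _ (mem_image_of_mem g ha),
      hgap.2 ⟨hroof.le, hroof.subset_covered⟩, hfst, hsnd⟩

theorem IsLabelledForest.existsUnique_isSlot (h : IsLabelledForest L g) (hl : l ∉ L)
    (hcard : #L < t) : ∃! w, IsSlot L g l (w, t) := by
  have huncovered : (range t \ covered (L.image g)).Nonempty := by
    refine sdiff_nonempty_of_card_lt_card ?_
    rwa [h.isGapForest.card_covered, card_image_of_injOn h.injOn, card_range]
  obtain ⟨x, hx, hlast⟩ := exists_max_image _ id huncovered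
  simp only [mem_sdiff, mem_range, id] at hx hlast
  obtain ⟨hxt, hx⟩ := hx
  have hcov : ∀ y, x < y → y < t → y ∈ covered (L.image g) := fun y hxy hyt =>
    by_contra fun hy => hxy.not_ge (hlast y ⟨hyt, hy⟩)
  simp only [isSlot_iff_onRoof hxt hx hcov]
  have hroof : ∃ v, OnRoof (L.image g) x v ∧ ∀ a ∈ L, (g a).1 = v → l < a := by
    refine ⟨x, onRoof_self hx, fun a ha hax => (hx ?_).elim⟩
    have hmem := mem_image_of_mem g ha
    exact mem_covered.2 ⟨_, hmem, hax.le, hax ▸ h.isGapForest.fst_lt_snd _ hmem⟩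
  classical
  obtain ⟨hw, hfst⟩ := Nat.find_spec hroof
  refine ⟨Nat.find hroof, ⟨hw, hfst, fun a ha haw => ?_⟩, fun w' ⟨hw', hfst', hsnd'⟩ => ?_⟩
  · refine lt_of_not_ge fun hla => ?_
    have hla := hla.lt_of_ne (by rintro rfl; exact hl ha)
    obtain ⟨u, hu, hroof_u⟩ := h.exists_onRoof_lt hw ⟨a, ha, haw, hla⟩
    exact Nat.find_min hroof hu hroof_u
  · refine ((Nat.find_min' hroof ⟨hw', hfst'⟩).eq_of_not_lt fun hlt => ?_).symm
    obtain ⟨a, ha, haw, hla⟩ := h.exists_lt_snd_eq hx hw hw' hlt hfst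
    exact hla.asymm (hsnd' a ha haw)

theorem induction_on_max_value_max_label (f : α → ℕ) {motive : Finset α → Prop} (empty : motive ∅)
    (insert : ∀ l L, l ∉ L → (∀ a ∈ L, f a ≤ f l) → (∀ a ∈ L, f a = f l → a < l) →
      motive L → motive (insert l L)) (L : Finset α) : motive L := by
  induction L using Finset.induction_on_max_value (fun a => toLex (f a, a)) with
  | empty => exact empty
  | insert l L hl hmax ih =>
    simp only [Prod.Lex.toLex_le_toLex] at hmax
    refine insert l L hl (fun a ha => ?_) (fun a ha heq => ?_) ih
    · exact (hmax a ha).elim le_of_lt fun h => h.1.le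
    · have hle : a ≤ l := (hmax a ha).elim (fun h => (h.ne heq).elim) And.right
      exact hle.lt_of_ne (by rintro rfl; exact hl ha)

theorem IsBallot.exists_isLabelledForest (hf : IsBallot L f) :
    ∃ g, IsLabelledForest L g ∧ ∀ a ∈ L, (g a).2 = f a := by
  induction L using induction_on_max_value_max_label f with
  | empty => exact ⟨0, ⟨by simp, by simpa using isGapForest_empty, by simp⟩, by simp⟩
  | insert l L hl hle htie ih =>
    obtain ⟨g, h, hsnd⟩ := ih (hf.mono (subset_insert l L))
    obtain ⟨w, hw, -⟩ := h.existsUnique_isSlot hl (hf.card_lt_of_insert hl hle)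
    let g' := Function.update g l (w, f l)
    have hgl : g' l = (w, f l) := Function.update_self ..
    have hg : Set.EqOn g g' L := fun a ha =>
      (Function.update_of_ne (ne_of_mem_of_not_mem ha hl) ..).symm
    have hsnd' : ∀ a ∈ L, (g' a).2 = f a := fun a ha => hg ha ▸ hsnd a ha
    refine ⟨g', IsSlot.isLabelledForest_insert (hgl ▸ hw.congr hg) (h.congr hg) hl
      (fun a ha => ?_) (fun a ha heq => ?_), forall_mem_insert .. |>.2 ⟨by rw [hgl], hsnd'⟩⟩
    · rw [hsnd' a ha, hgl]
      exact hle a ha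
    · rw [hsnd' a ha, hgl] at heq
      exact htie a ha heq

theorem IsLabelledForest.eqOn (h : IsLabelledForest L g) (h' : IsLabelledForest L g')
    (hsnd : ∀ a ∈ L, (g a).2 = (g' a).2) : Set.EqOn g g' L := by
  induction L using induction_on_max_value_max_label (fun a => (g a).2) with
  | empty => simp
  | insert l L hl hle htie ih =>
    obtain ⟨hsnd_l, hsnd⟩ := forall_mem_insert .. |>.1 hsnd
    have hle' : ∀ a ∈ L, (g' a).2 ≤ (g' l).2 := fun a ha => hsnd a ha ▸ hsnd_l ▸ hle a ha
    have htie' : ∀ a ∈ L, (g' a).2 = (g' l).2 → a < l := fun a ha =>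
      hsnd a ha ▸ hsnd_l ▸ htie a ha
    have hcard : #L < (g l).2 := h.isBallot_snd.card_lt_of_insert hl hle
    obtain ⟨hL, hslot⟩ := h.and_isSlot_of_insert hl hle htie
    obtain ⟨hL', hslot'⟩ := h'.and_isSlot_of_insert hl hle' htie'
    have hg := ih hL hL' hsnd
    have hfst : (g l).1 = (g' l).1 := (hL.existsUnique_isSlot hl hcard).unique hslot
      (by rw [hsnd_l]; exact hslot'.congr hg.symm)
    intro a ha
    rcases mem_insert.1 ha with rfl | ha
    · exact Prod.ext hfst hsnd_l
    · exact hg ha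

end Labelled

/-! ### Linear extensions -/

/-- The labelled forests whose set of labels is `α` and whose chords end at or before `n`. -/
def labelledForests (α : Type*) [LinearOrder α] [Fintype α] (n : ℕ) : Set (α → ℕ × ℕ) :=
  {g | IsLabelledForest univ g ∧ ∀ a, (g a).2 ≤ n}

theorem ncard_labelledForests {α : Type*} [LinearOrder α] [Fintype α] (n : ℕ) :
    (labelledForests α n).ncard = (ballotFunctions n (univ : Finset α)).ncard := by
  refine Set.BijOn.ncard_eq (f := fun g a => (g a).2) ⟨fun g hg => ?_, fun g hg g' hg' heq => ?_,
    fun f hf => ?_⟩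
  · have hballot := hg.1.isBallot_snd
    exact ⟨hg.2, by simpa [Set.eq_univ_iff_forall] using fun a => hballot.ne_zero (mem_univ a),
      hballot⟩
  · have heqOn := hg.1.eqOn hg'.1 fun a _ => congrFun heq a
    exact funext fun a => heqOn (mem_coe.2 (mem_univ a))
  · obtain ⟨hle, -, hballot⟩ := hf
    obtain ⟨g, hg, hsnd⟩ := hballot.exists_isLabelledForest
    have hsnd : ∀ a, (g a).2 = f a := fun a => hsnd a (mem_univ a)
    exact ⟨g, ⟨hg, fun a => hsnd a ▸ hle a⟩, funext hsnd⟩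

section LinearExtensions

variable {ε : ℕ → Bool} {d : Finset (ℕ × ℕ)} {c c' : ℕ × ℕ} {n : ℕ}

theorem Cw.sharesEndpoint (h : Cw ε c' c) : SharesEndpoint c c' := by
  rcases h with h | h | h | h <;> simp [SharesEndpoint, h.1]

theorem Cw.ne (h : Cw ε c' c) (hc : c.1 < c.2) : c ≠ c' := by
  rintro rfl
  rcases h with h | h | h | h <;> omega

theorem forall_leD_iff_forall_cw {α : Type*} [LinearOrder α] {g : α → ℕ × ℕ}
    (hrange : Set.range g = d) (hinj : Function.Injective g) (hlt : ∀ c ∈ d, c.1 < c.2) :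
    (∀ a b, leD ε d (g a) (g b) → a ≤ b) ↔ ∀ a b, Cw ε (g b) (g a) → a < b := by
  have hmem (a : α) : g a ∈ d := mem_coe.1 (hrange ▸ Set.mem_range_self a)
  constructor
  · intro h a b hcw
    have hab : a ≤ b := h a b (.single ⟨hmem a, hmem b, hcw.sharesEndpoint, hcw⟩)
    exact hab.lt_of_ne fun hab => hcw.ne (hlt _ (hmem a)) (congrArg g hab)
  · intro h a b hle
    suffices ∀ c, leD ε d (g a) c → ∀ b, g b = c → a ≤ b from this _ hle b rfl
    intro c hle
    induction hle with
    | refl => exact fun b hb => (hinj hb).ge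
    | tail _ hstep ih =>
      rintro b rfl
      obtain ⟨e, rfl⟩ : _ ∈ Set.range g := hrange ▸ mem_coe.2 hstep.1
      exact (ih e rfl).trans (h e b hstep.2.2.2).le

theorem linExtCount_eq_ncard (hcard : #d = n) (hlt : ∀ c ∈ d, c.1 < c.2) :
    linExtCount ε d = {g : Fin n → ℕ × ℕ | Set.range g = d ∧ Function.Injective g ∧
      ∀ a b, Cw ε (g b) (g a) → a < b}.ncard := by
  subst hcard
  refine congrArg Set.ncard (Set.ext fun g => ?_)
  have hrange (hinj : Function.Injective g) : (∀ a, g a ∈ d) ↔ Set.range g = d := by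
    refine ⟨fun hmem => ?_, fun hrange a => mem_coe.1 (hrange ▸ Set.mem_range_self a)⟩
    have himage : univ.image g = d := eq_of_subset_of_card_le
      (image_subset_iff.2 fun a _ => hmem a) (by simp [card_image_of_injective _ hinj])
    simpa using congrArg (fun s : Finset (ℕ × ℕ) => (s : Set (ℕ × ℕ))) himage
  constructor
  · rintro ⟨hmem, hinj, hle⟩
    have hd := (hrange hinj).1 hmem
    exact ⟨hd, hinj, (forall_leD_iff_forall_cw hd hinj hlt).1 hle⟩
  · rintro ⟨hd, hinj, hcw⟩
    exact ⟨(hrange hinj).2 hd, hinj, (forall_leD_iff_forall_cw hd hinj hlt).2 hcw⟩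

theorem finite_setOf_isDiagram : {d | #d = n ∧ IsDiagram n ε d}.Finite := by
  refine (finite_toSet (range n ×ˢ range (n + 1)).powerset).subset fun d hd => ?_
  refine mem_coe.2 (mem_powerset.2 fun c hc => ?_)
  have hvalid := hd.2.1 c hc
  simp only [mem_product, mem_range]
  omega

theorem linExtCount_eq_ncard_labelledForests (hcard : #d = n) (hd : IsDiagram n allMinus d) :
    linExtCount allMinus d = {g ∈ labelledForests (Fin n) n | univ.image g = d}.ncard := by
  rw [linExtCount_eq_ncard hcard fun c hc => (hd.1 c hc).1]
  refine congrArg Set.ncard (Set.ext fun g => ?_)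
  constructor
  · rintro ⟨hrange, hinj, hcw⟩
    have himage : univ.image g = d := coe_injective (by simpa using hrange)
    exact ⟨⟨⟨hinj.injOn, himage ▸ hd.isGapForest hcard, fun a _ b _ => hcw a b⟩,
      fun a => (hd.1 _ (himage ▸ mem_image_of_mem g (mem_univ a))).2⟩, himage⟩
  · rintro ⟨⟨hg, -⟩, rfl⟩
    exact ⟨by simp, by simpa using hg.injOn, fun a b => hg.lt_of_cw a (mem_univ a) b (mem_univ b)⟩

theorem finite_labelledForests {α : Type*} [LinearOrder α] [Fintype α] :
    (labelledForests α n).Finite := by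
  refine (Set.Finite.pi' fun _ : α => Set.finite_Iic (n, n)).subset fun g hg a => ?_
  have hlt := hg.1.isGapForest.fst_lt_snd _ (mem_image_of_mem g (mem_univ a))
  exact ⟨hlt.le.trans (hg.2 a), hg.2 a⟩

theorem finsum_linExtCount_eq_ncard_labelledForests (n : ℕ) :
    ∑ᶠ d ∈ {d : Finset (ℕ × ℕ) | #d = n ∧ IsDiagram n allMinus d}, linExtCount allMinus d =
      (labelledForests (Fin n) n).ncard := by
  let fiber (d : Finset (ℕ × ℕ)) := {g ∈ labelledForests (Fin n) n | univ.image g = d}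
  have hunion : ⋃ d ∈ {d | #d = n ∧ IsDiagram n allMinus d}, fiber d =
      labelledForests (Fin n) n := by
    refine (Set.iUnion₂_subset fun d _ => Set.sep_subset _ _).antisymm fun g hg => ?_
    refine Set.mem_biUnion (x := univ.image g) ⟨?_, ?_⟩ ⟨hg, rfl⟩
    · rw [card_image_of_injOn hg.1.injOn, card_univ, Fintype.card_fin]
    · exact hg.1.isGapForest.isDiagram (forall_mem_image.2 fun a _ => hg.2 a)
  have hdisj : {d | #d = n ∧ IsDiagram n allMinus d}.PairwiseDisjoint fiber :=
    fun d _ d' _ hdd' => Set.disjoint_left.2 fun g hg hg' => hdd' (hg.2.symm.trans hg'.2)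
  rw [finsum_mem_congr rfl fun d hd => linExtCount_eq_ncard_labelledForests hd.1 hd.2,
    ← finite_setOf_isDiagram.ncard_biUnion
      (fun d _ => finite_labelledForests.subset (Set.sep_subset _ _)) hdisj, hunion]

end LinearExtensions

/-- Corollary 6.2: `(n+1)^{n−1}` equals the sum over all noncrossing spanning trees `d` on
`{0,…,n}` of the number of linear extensions of `P_d`. -/
theorem cayley_sum_of_linear_extensions (n : ℕ) (hn : 1 ≤ n) :
    (n + 1) ^ (n - 1) =
      ∑ᶠ d ∈ {d : Finset (ℕ × ℕ) | d.card = n ∧ IsDiagram n (fun _ => false) d},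
        linExtCount (fun _ => false) d := by
  have hcount := ncard_ballotFunctions_add (L := (univ : Finset (Fin n))) (t := n) (by simp)
  rw [card_univ, Fintype.card_fin] at hcount
  have hpow : (n + 1) ^ n = n * (n + 1) ^ (n - 1) + (n + 1) ^ (n - 1) := by
    rw [← Nat.succ_mul, ← pow_succ', Nat.sub_add_cancel hn]
  rw [finsum_linExtCount_eq_ncard_labelledForests, ncard_labelledForests]
  omega

end ESPaper
end
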